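/- For every regular uncountable cardinal κ and every nonempty chain Γ₀, there exists a chain Γ containing Γ₀ as a subchain together with an order isomorphism ι : Γ → G^{<0}, where G = (ℝ^Γ)_κ is the κ-bounded Hahn group over Γ and G^{<0} is its chain of strictly negative elements. (Existence of the κ-th iterated lexicographic power of Γ₀.) -/

import Mathlib

open Cardinal

universe u

/-- The lexicographic (leading-coefficient) strict order on Hahn series. -/
def hlt {Γ : Type*} [LinearOrder Γ] (f g : HahnSeries Γ ℝ) : Prop :=
  ∃ a, f.coeff a < g.coeff a ∧ ∀ b, b < a → f.coeff b = g.coeff b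

/-- `Γ` is a κ-th iterated lexicographic power of `Γ₀`: it contains `Γ₀` as a
subchain and comes with an order isomorphism `ι : Γ → G^{<0}`, where
`G = (ℝ^Γ)_κ` is the κ-bounded Hahn group over `Γ` and `G^{<0}` is its chain of
strictly negative elements. -/
def IsIterLexPower (κ : Cardinal) (Γ₀ Γ : Type*) [LinearOrder Γ₀] [LinearOrder Γ] : Prop :=
  (∃ e : Γ₀ → Γ, StrictMono e) ∧
  ∃ ι : Γ → HahnSeries Γ ℝ,
    (∀ γ, #(ι γ).support < κ ∧ hlt (ι γ) 0) ∧
    (∀ γ γ', γ < γ' ↔ hlt (ι γ) (ι γ')) ∧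
    (∀ g : HahnSeries Γ ℝ, #g.support < κ → hlt g 0 → ∃ γ, ι γ = g)

/-!
Fix a set `U` of codes together with an injection `c` into `U` from the real functions on `U` with
fewer than `κ` nonzero values. If `P` is a chain with elements in `U`, extending series by zero and
applying `c` turns the negative cone of `(ℝ^P)_κ` into another chain `F P` with elements in `U`, and
`F` is monotone for the inclusion of chains. Chains in `U` are closed under unions of towers, so
Zorn's lemma extends every chain `P ≤ F P` to a fixed point of `F`, that is, to a chain isomorphic
to its own negative cone. In `Γ₀` the map `γ ↦ -1_γ` is strictly increasing into the negative cone,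
so if `c` sends `-1_γ` to the code of `γ`, then `Γ₀ ≤ F Γ₀` and the iteration can start at `Γ₀`.
-/

universe v w

theorem exists_ge_isFixedPt_of_monotone {α : Type*} [ChainCompletePartialOrder α] {f : α → α}
    (hf : Monotone f) {x : α} (hx : x ≤ f x) : ∃ y, x ≤ y ∧ Function.IsFixedPt f y := by
  obtain ⟨m, hxm, hm⟩ := zorn_le_nonempty₀ {y | y ≤ f y} (fun C hC hchain y hy ↦ by
    let D : NonemptyChain α := ⟨C, ⟨y, hy⟩, hchain⟩
    have le_sup : ∀ z ∈ C, z ≤ ChainCompletePartialOrder.cSup D :=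
      ChainCompletePartialOrder.le_cSup D
    exact ⟨_, ChainCompletePartialOrder.cSup_le D _ fun z hz ↦
      (hC hz).trans (hf (le_sup z hz)), le_sup⟩) x hx
  exact ⟨m, hxm, (hm.eq_of_le (hf hm.prop) hm.prop).symm⟩

/-- A chain whose elements form a subset of `U`, encoded by its order relation alone: `x : U` is
an element of the chain if and only if `le x x`. -/
@[ext]
structure Subchain (U : Type w) where
  le : U → U → Prop
  refl_left : ∀ {x y}, le x y → le x x
  refl_right : ∀ {x y}, le x y → le y y
  antisymm : ∀ {x y}, le x y → le y x → x = y
  trans : ∀ {x y z}, le x y → le y z → le x z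
  total : ∀ {x y}, le x x → le y y → le x y ∨ le y x

namespace Subchain

variable {U : Type w} {P Q : Subchain U}

instance : CoeSort (Subchain U) (Type w) :=
  ⟨fun P ↦ {x // P.le x x}⟩

noncomputable instance : LinearOrder P where
  le x y := P.le x y
  le_refl x := x.2
  le_trans _ _ _ := P.trans
  le_antisymm _ _ hxy hyx := Subtype.ext (P.antisymm hxy hyx)
  le_total x y := P.total x.2 y.2
  toDecidableLE := Classical.decRel _

instance : PartialOrder (Subchain U) :=
  PartialOrder.lift le fun _ _ ↦ Subchain.ext

instance : ChainCompletePartialOrder (Subchain U) where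
  cSup C :=
    have exists_common {P Q} (hP : P ∈ C.carrier) (hQ : Q ∈ C.carrier) :
        ∃ S ∈ C.carrier, P ≤ S ∧ Q ≤ S := by
      rcases C.isChain'.total hP hQ with h | h
      exacts [⟨Q, hQ, h, le_rfl⟩, ⟨P, hP, le_rfl, h⟩]
    { le x y := ∃ P ∈ C.carrier, P.le x y
      refl_left := fun ⟨P, hP, h⟩ ↦ ⟨P, hP, P.refl_left h⟩
      refl_right := fun ⟨P, hP, h⟩ ↦ ⟨P, hP, P.refl_right h⟩
      antisymm := fun ⟨P, hP, hxy⟩ ⟨Q, hQ, hyx⟩ ↦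
        have ⟨S, _, hPS, hQS⟩ := exists_common hP hQ
        S.antisymm (hPS _ _ hxy) (hQS _ _ hyx)
      trans := fun ⟨P, hP, hxy⟩ ⟨Q, hQ, hyz⟩ ↦
        have ⟨S, hS, hPS, hQS⟩ := exists_common hP hQ
        ⟨S, hS, S.trans (hPS _ _ hxy) (hQS _ _ hyz)⟩
      total := fun ⟨P, hP, hx⟩ ⟨Q, hQ, hy⟩ ↦
        have ⟨S, hS, hPS, hQS⟩ := exists_common hP hQ
        (S.total (hPS _ _ hx) (hQS _ _ hy)).imp (⟨S, hS, ·⟩) (⟨S, hS, ·⟩) }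
  le_cSup _ P hP _ _ h := ⟨P, hP, h⟩
  cSup_le _ _ hub _ _ := fun ⟨P, hP, h⟩ ↦ hub P hP _ _ h

/-- The order embedding of a subchain into a larger one. -/
noncomputable def inclusion (h : P ≤ Q) : P ↪o Q :=
  OrderEmbedding.ofStrictMono (fun x ↦ ⟨x, h _ _ x.2⟩) <|
    Monotone.strictMono_of_injective (fun _ _ hxy ↦ h _ _ hxy)
      fun _ _ hxy ↦ Subtype.ext (Subtype.mk.inj hxy)

section OfEmbedding

variable {α β : Type*} [LinearOrder α] [LinearOrder β]

/-- The subchain of `U` obtained by transporting the chain `α` along an injection into `U`. -/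
def ofEmbedding (e : α ↪ U) : Subchain U where
  le := Relation.Map (· ≤ ·) e e
  refl_left := by
    rintro _ _ ⟨a, b, -, rfl, rfl⟩
    exact ⟨a, a, le_rfl, rfl, rfl⟩
  refl_right := by
    rintro _ _ ⟨a, b, -, rfl, rfl⟩
    exact ⟨b, b, le_rfl, rfl, rfl⟩
  antisymm := by
    rintro _ _ ⟨a, b, hab, rfl, rfl⟩ ⟨b', a', hba, hb, ha⟩
    rw [e.injective hb, e.injective ha] at hba
    rw [hab.antisymm hba]
  trans := by
    rintro _ _ _ ⟨a, b, hab, rfl, rfl⟩ ⟨b', d, hbd, hb, rfl⟩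
    rw [e.injective hb] at hbd
    exact ⟨a, d, hab.trans hbd, rfl, rfl⟩
  total := by
    rintro _ _ ⟨a, -, -, rfl, -⟩ ⟨b, -, -, rfl, -⟩
    exact (le_total a b).imp (⟨a, b, ·, rfl, rfl⟩) (⟨b, a, ·, rfl, rfl⟩)

/-- A chain is isomorphic to its transport along an injection. -/
noncomputable def orderIsoOfEmbedding (e : α ↪ U) : α ≃o ofEmbedding e :=
  StrictMono.orderIsoOfSurjective (fun a ↦ ⟨e a, a, a, le_rfl, rfl, rfl⟩)
    (Monotone.strictMono_of_injective (fun a b hab ↦ ⟨a, b, hab, rfl, rfl⟩)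
      fun _ _ hab ↦ e.injective (Subtype.mk.inj hab))
    (by
      rintro ⟨_, a, -, -, rfl, -⟩
      exact ⟨a, rfl⟩)

theorem ofEmbedding_le_ofEmbedding {e : α ↪ U} {e' : β ↪ U} {i : α → β} (hi : Monotone i)
    (h : ∀ a, e' (i a) = e a) : ofEmbedding e ≤ ofEmbedding e' := by
  rintro _ _ ⟨a, b, hab, rfl, rfl⟩
  exact ⟨i a, i b, hi hab, h a, h b⟩

end OfEmbedding

end Subchain

section Coding

/-- The functions `U → R` with support of cardinality less than `κ`. -/
abbrev SmallSupport (κ : Cardinal.{w}) (U : Type w) (R : Type v) [Zero R] : Type (max v w) :=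
  {f : U → R // #f.support < κ}

theorem exists_extend_eq_of_card_support_le {ι U : Type w} {R : Type v} [Zero R] {f : U → R}
    (hf : #f.support ≤ #ι) :
    ∃ (I : Set ι) (s : I → U) (r : I → R), Function.extend s r 0 = f := by
  obtain ⟨e⟩ := hf
  let s : Set.range e → U := Subtype.val ∘ (Equiv.ofInjective e e.injective).symm
  have hs : s.Injective := Subtype.val_injective.comp (Equiv.injective _)
  refine ⟨Set.range e, s, f ∘ s, funext fun u ↦ ?_⟩
  by_cases hu : u ∈ Set.range s
  · obtain ⟨i, rfl⟩ := hu
    exact hs.extend_apply _ _ i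
  · rw [Function.extend_apply' _ _ _ hu, Pi.zero_apply]
    by_contra hfu
    exact hu ⟨Equiv.ofInjective e e.injective ⟨u, Ne.symm hfu⟩, by simp [s]⟩

/-- Well-founded trees coding functions on the type of trees itself: a leaf is the code of a
function supported at that leaf, a node lists the support and the values of a function, indexed by
a subset of `ι`. -/
inductive SeriesCode (ι : Type w) (α : Type u) (R : Type v) : Type (max u v w)
  | leaf (a : α)
  | node (I : Set ι) (s : I → SeriesCode ι α R) (r : I → R)

open scoped Classical in
/-- The function coded by a tree, with `r₀` as the value coded by leaves. -/
noncomputable def SeriesCode.decode {ι : Type w} {α : Type u} {R : Type v} [Zero R] (r₀ : R) :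
    SeriesCode ι α R → SeriesCode ι α R → R
  | leaf a => Pi.single (leaf a) r₀
  | node _ s r => Function.extend s r 0

open scoped Classical in
theorem exists_smallSupport_embedding (κ : Cardinal.{max u v}) (α : Type u) {R : Type v} [Zero R]
    {r₀ : R} (hr₀ : r₀ ≠ 0) :
    ∃ (U : Type (max u v)) (e : α ↪ U) (c : SmallSupport κ U R ↪ U),
      ∀ f a, f.1 = Pi.single (e a) r₀ → c f = e a := by
  let U := SeriesCode κ.out α R
  let leaf : α ↪ U := ⟨.leaf, fun _ _ ↦ SeriesCode.leaf.inj⟩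
  have exists_code (f : SmallSupport κ U R) :
      ∃ x : U, x.decode r₀ = f.1 ∧ ∀ a, f.1 = Pi.single (leaf a) r₀ → x = leaf a := by
    by_cases hf : ∃ a, f.1 = Pi.single (leaf a) r₀
    · obtain ⟨a, ha⟩ := hf
      refine ⟨leaf a, ha.symm, fun b hb ↦ Set.singleton_injective ?_⟩
      rw [← Pi.support_single_of_ne hr₀, ← ha, hb, Pi.support_single_of_ne hr₀]
    · obtain ⟨I, s, r, h⟩ := exists_extend_eq_of_card_support_le (ι := κ.out) (f := f.1)
        (f.2.le.trans_eq κ.mk_out.symm)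
      exact ⟨.node I s r, h, fun a ha ↦ absurd ⟨a, ha⟩ hf⟩
  choose c decode_c c_single using exists_code
  have c_injective : c.Injective := fun f g h ↦ Subtype.ext (by rw [← decode_c, h, decode_c])
  exact ⟨U, leaf, ⟨c, c_injective⟩, c_single⟩

end Coding

section ExtendCoeff

variable {Γ Δ : Type w} {U : Type*} {R : Type v} [PartialOrder Γ] [PartialOrder Δ] [Zero R]

theorem cardSupp_embDomain_le (i : Γ ↪o Δ) (g : HahnSeries Γ R) :
    (g.embDomain i).cardSupp ≤ g.cardSupp :=
  (mk_le_mk_of_subset HahnSeries.support_embDomain_subset).trans mk_image_le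

theorem coeff_embDomain_eq_extend (i : Γ ↪o Δ) (g : HahnSeries Γ R) :
    (g.embDomain i).coeff = Function.extend i g.coeff 0 := by
  funext b
  by_cases hb : b ∈ Set.range i
  · obtain ⟨a, rfl⟩ := hb
    rw [HahnSeries.embDomain_coeff, i.injective.extend_apply]
  · rw [HahnSeries.embDomain_of_notMem_range hb, Function.extend_apply' _ _ _ hb, Pi.zero_apply]

open scoped Classical in
theorem extend_coeff_single {e : Γ → U} (he : e.Injective) (a : Γ) (r : R) :
    Function.extend e (HahnSeries.single a r).coeff 0 = Pi.single (e a) r := by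
  funext u
  by_cases hu : u ∈ Set.range e
  · obtain ⟨b, rfl⟩ := hu
    rw [he.extend_apply, HahnSeries.coeff_single, Pi.single_apply]
    simp only [he.eq_iff]
  · rw [Function.extend_apply' _ _ _ hu, Pi.single_eq_of_ne fun h ↦ hu ⟨a, h.symm⟩, Pi.zero_apply]

end ExtendCoeff

/-- The chain of strictly negative elements of the `κ`-bounded Hahn group over `Γ` with
coefficients in `R`, ordered lexicographically. -/
abbrev HahnNegCone (κ : Cardinal.{w}) (Γ : Type w) (R : Type v) [LinearOrder Γ] [Zero R]
    [PartialOrder R] : Type (max v w) :=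
  {g : Lex (HahnSeries Γ R) // (ofLex g).cardSupp < κ ∧ g < 0}

namespace HahnNegCone

variable {κ : Cardinal.{w}} {Γ Δ U : Type w} {R : Type v} [LinearOrder Γ] [LinearOrder Δ] [Zero R]
  [PartialOrder R]

/-- The map of negative cones that extends series by zero along an embedding of chains. -/
noncomputable def map (i : Γ ↪o Δ) (g : HahnNegCone κ Γ R) : HahnNegCone κ Δ R :=
  ⟨HahnSeries.embDomainOrderEmbedding i g, (cardSupp_embDomain_le i _).trans_lt g.2.1,
    calc HahnSeries.embDomainOrderEmbedding i g.1
      _ < HahnSeries.embDomainOrderEmbedding i 0 :=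
        (HahnSeries.embDomainOrderEmbedding i).strictMono g.2.2
      _ = 0 := congrArg toLex HahnSeries.embDomain_zero⟩

theorem monotone_map (i : Γ ↪o Δ) : Monotone (map i : HahnNegCone κ Γ R → HahnNegCone κ Δ R) :=
  fun _ _ h ↦ (HahnSeries.embDomainOrderEmbedding i).monotone h

/-- The monomial with exponent `a` and negative coefficient `r`. -/
noncomputable def single (hκ : 1 < κ) {r : R} (hr : r < 0) (a : Γ) : HahnNegCone κ Γ R :=
  ⟨toLex (HahnSeries.single a r), (HahnSeries.cardSupp_single_le a r).trans_lt hκ,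
    (HahnSeries.lt_iff _ _).2 ⟨a, fun _ hj ↦ HahnSeries.coeff_single_of_ne hj.ne,
      (HahnSeries.coeff_single_same a r).trans_lt hr⟩⟩

theorem monotone_single (hκ : 1 < κ) {r : R} (hr : r < 0) :
    Monotone (single hκ hr : Γ → HahnNegCone κ Γ R) := by
  refine monotone_iff_forall_lt.2 fun a b hab ↦
    le_of_lt ((HahnSeries.lt_iff _ _).2 ⟨a, fun j hj ↦ ?_, ?_⟩)
  · exact (HahnSeries.coeff_single_of_ne hj.ne).trans
      (HahnSeries.coeff_single_of_ne (hj.trans hab).ne).symm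
  · calc (HahnSeries.single a r).coeff a
      _ = r := HahnSeries.coeff_single_same a r
      _ < 0 := hr
      _ = (HahnSeries.single b r).coeff a := (HahnSeries.coeff_single_of_ne hab.ne).symm

/-- The coefficient function of a series over `Γ`, extended by zero along an injection `Γ ↪ U`. -/
noncomputable def extendCoeff (e : Γ ↪ U) : HahnNegCone κ Γ R ↪ SmallSupport κ U R where
  toFun g := ⟨Function.extend e (ofLex g.1).coeff 0,
    ((mk_le_mk_of_subset Function.support_extend_zero_subset).trans mk_image_le).trans_lt g.2.1⟩
  inj' _ _ h := Subtype.ext <| ofLex.injective <| HahnSeries.coeff_injective <|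
    Function.extend_injective e.injective _ (Subtype.mk.inj h)

theorem extendCoeff_map {i : Γ ↪o Δ} {e : Γ ↪ U} {e' : Δ ↪ U} (h : ∀ a, e' (i a) = e a)
    (g : HahnNegCone κ Γ R) : extendCoeff e' (map i g) = extendCoeff e g := by
  refine Subtype.ext ?_
  calc Function.extend e' ((ofLex g.1).embDomain i).coeff 0
    _ = Function.extend e' (Function.extend i (ofLex g.1).coeff 0) 0 := by
      rw [coeff_embDomain_eq_extend]
    _ = Function.extend (e' ∘ i) (ofLex g.1).coeff 0 :=
      (i.injective.extend_comp e'.injective _ _).symm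
    _ = Function.extend e (ofLex g.1).coeff 0 := by rw [show e' ∘ i = e from funext h]

end HahnNegCone

namespace Subchain

variable {κ : Cardinal.{w}} {U : Type w} {R : Type v} [Zero R] [LinearOrder R]
  (c : SmallSupport κ U R ↪ U)

/-- The injection of the negative cone over a subchain `P` of `U` into `U` given by a coding `c` of
functions on `U`. -/
noncomputable def negConeCode (P : Subchain U) : HahnNegCone κ P R ↪ U :=
  (HahnNegCone.extendCoeff (Function.Embedding.subtype _)).trans c

/-- The negative cone over a subchain `P` of `U`, realised again as a subchain of `U`. -/
noncomputable def negCone (P : Subchain U) : Subchain U :=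
  ofEmbedding (P.negConeCode c)

theorem monotone_negCone : Monotone (negCone c) := fun _ _ h ↦
  ofEmbedding_le_ofEmbedding (HahnNegCone.monotone_map (inclusion h))
    fun g ↦ congrArg c (HahnNegCone.extendCoeff_map (fun _ ↦ rfl) g)

open scoped Classical in
theorem ofEmbedding_le_negCone {α : Type*} [LinearOrder α] {e : α ↪ U} (hκ : 1 < κ) {r : R}
    (hr : r < 0) (hc : ∀ f a, f.1 = Pi.single (e a) r → c f = e a) :
    ofEmbedding e ≤ (ofEmbedding e).negCone c :=
  ofEmbedding_le_ofEmbedding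
    ((HahnNegCone.monotone_single hκ hr).comp (orderIsoOfEmbedding e).monotone)
    fun a ↦ hc _ a (extend_coeff_single Subtype.val_injective _ r)

end Subchain

theorem exists_orderIso_hahnNegCone {κ : Cardinal.{max u v}} (hκ : 1 < κ) (Γ₀ : Type u)
    [LinearOrder Γ₀] {R : Type v} [Zero R] [LinearOrder R] {r : R} (hr : r < 0) :
    ∃ (Γ : Type (max u v)) (_ : LinearOrder Γ),
      Nonempty (Γ₀ ↪o Γ) ∧ Nonempty (Γ ≃o HahnNegCone κ Γ R) := by
  obtain ⟨U, e, c, hc⟩ := exists_smallSupport_embedding κ Γ₀ hr.ne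
  obtain ⟨P, le_P, fixed_P⟩ := exists_ge_isFixedPt_of_monotone (Subchain.monotone_negCone c)
    (Subchain.ofEmbedding_le_negCone c hκ hr hc)
  have iso : Nonempty (HahnNegCone κ P R ≃o P.negCone c) :=
    ⟨Subchain.orderIsoOfEmbedding (P.negConeCode c)⟩
  rw [fixed_P.eq] at iso
  exact ⟨P, inferInstance,
    ⟨(Subchain.orderIsoOfEmbedding e).toOrderEmbedding.trans (Subchain.inclusion le_P)⟩,
    iso.map OrderIso.symm⟩

theorem hlt_iff_toLex_lt {Γ : Type*} [LinearOrder Γ] {f g : HahnSeries Γ ℝ} :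
    hlt f g ↔ toLex f < toLex g := by
  simp only [hlt, HahnSeries.lt_iff, ofLex_toLex, and_comm]

theorem isIterLexPower_of_orderIso {κ : Cardinal.{u}} {Γ₀ : Type*} {Γ : Type u} [LinearOrder Γ₀]
    [LinearOrder Γ] (e : Γ₀ ↪o Γ) (ι : Γ ≃o HahnNegCone κ Γ ℝ) : IsIterLexPower κ Γ₀ Γ :=
  ⟨⟨e, e.strictMono⟩, fun γ ↦ ofLex (ι γ).1,
    fun γ ↦ ⟨(ι γ).2.1, hlt_iff_toLex_lt.2 (ι γ).2.2⟩,
    fun _ _ ↦ ι.lt_iff_lt.symm.trans hlt_iff_toLex_lt.symm,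
    fun g hg hneg ↦
      let g' : HahnNegCone κ Γ ℝ := ⟨toLex g, hg, hlt_iff_toLex_lt.1 hneg⟩
      ⟨ι.symm g', congrArg (fun h ↦ ofLex h.1) (ι.apply_symm_apply g')⟩⟩

theorem exists_iterated_lexicographic_power_general {κ : Cardinal.{u}} (hκ : 1 < κ) (Γ₀ : Type u)
    [LinearOrder Γ₀] : ∃ (Γ : Type u) (li : LinearOrder Γ), @IsIterLexPower κ Γ₀ Γ _ li := by
  obtain ⟨Γ, li, ⟨e⟩, ⟨ι⟩⟩ :=
    exists_orderIso_hahnNegCone.{u, 0} hκ Γ₀ (neg_one_lt_zero : (-1 : ℝ) < 0)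
  exact ⟨Γ, li, isIterLexPower_of_orderIso e ι⟩

/-- **Existence of the κ-th iterated lexicographic power.**  For every regular
uncountable cardinal `κ` and every nonempty chain `Γ₀` there is a chain `Γ`
containing `Γ₀` as a subchain together with an order isomorphism
`ι : Γ → G^{<0}`, where `G = (ℝ^Γ)_κ`. -/
theorem exists_iterated_lexicographic_power
    (κ : Cardinal.{u}) (hreg : κ.IsRegular) (hunc : ℵ₀ < κ)
    (Γ₀ : Type u) [LinearOrder Γ₀] [Nonempty Γ₀] :
    ∃ (Γ : Type u) (li : LinearOrder Γ), @IsIterLexPower κ Γ₀ Γ _ li := by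
  exact exists_iterated_lexicographic_power_general (one_lt_aleph0.trans hunc) Γ₀
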